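/- For every x ∈ {0,…,2^n−1} and every i ∈ {1,…,n}, the edge travel(i) is not an improving switch for the canonical policy π_x. -/

import Mathlib

/-! ## The Markov decision process `𝔅_n` -/

/-- Vertices of the MDP `𝔅_n`: a transportation vertex `t`, a sink `s`, a dummy vertex `d`,
and vertices `a i`, `b i` for `i ∈ {1,…,n}`. -/
inductive BV : Type where
  | t : BV
  | s : BV
  | d : BV
  | a : ℕ → BV
  | b : ℕ → BV
deriving DecidableEq

/-- The vertex `a i` for `i ∈ {1,…,n+1}`, with the convention `a (n+1) = s`. -/
def aN (n i : ℕ) : BV := if i = n + 1 then BV.s else BV.a i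

/-- The vertex `b i` for `i ∈ {1,…,n+1}`, with the convention `b (n+1) = d`. -/
def bN (n i : ℕ) : BV := if i = n + 1 then BV.d else BV.b i

/-- The vertex set of `𝔅_n`. -/
def IsBVertex (n : ℕ) : BV → Prop
  | BV.t => True
  | BV.s => True
  | BV.d => True
  | BV.a i => 1 ≤ i ∧ i ≤ n
  | BV.b i => 1 ≤ i ∧ i ≤ n

/-- The edge relation of `𝔅_n`: travel, enter, skip, board, stay, leave edges,
the edge `(d,s)` and the self-loop `(s,s)`. -/
def BEdge (n : ℕ) (u v : BV) : Prop :=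
  (∃ i, 1 ≤ i ∧ i ≤ n ∧ u = BV.t ∧ v = BV.a i) ∨
  (∃ i, 1 ≤ i ∧ i ≤ n ∧ u = BV.a i ∧ v = BV.b i) ∨
  (∃ i, 1 ≤ i ∧ i ≤ n ∧ u = BV.a i ∧ v = aN n (i + 1)) ∨
  (∃ i, 1 ≤ i ∧ i ≤ n ∧ u = BV.a i ∧ v = BV.t) ∨
  (∃ i, 1 ≤ i ∧ i ≤ n ∧ u = BV.b i ∧ v = bN n (i + 1)) ∨
  (∃ i, 1 ≤ i ∧ i ≤ n ∧ u = BV.b i ∧ v = aN n (i + 1)) ∨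
  (u = BV.d ∧ v = BV.s) ∨ (u = BV.s ∧ v = BV.s)

/-- The reward function of `𝔅_n`: `r(enter i) = 2^i`, `r(stay i) = 3/4`,
`r(board i) = -2^i + 5/4`, and reward `0` on all other edges. -/
def rB (n : ℕ) (u v : BV) : ℚ :=
  match u, v with
  | BV.a i, BV.b j => if i = j then 2 ^ i else 0
  | BV.a i, BV.t => -(2 ^ i) + 5 / 4
  | BV.b i, BV.b j => if j = i + 1 then 3 / 4 else 0
  | BV.b i, BV.d => if i = n then 3 / 4 else 0
  | _, _ => 0

/-- A policy for `𝔅_n` chooses an outgoing edge at every vertex. -/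
def IsBPolicy (n : ℕ) (π : BV → BV) : Prop := ∀ u, IsBVertex n u → BEdge n u (π u)

/-- A policy is weak unichain if it reaches the sink `s` from every vertex. -/
def BWeakUnichain (n : ℕ) (π : BV → BV) : Prop :=
  ∀ u, IsBVertex n u → ∃ k, π^[k] u = BV.s

open Classical in
/-- The value of a vertex `v` w.r.t. a (weak unichain) policy `π`:
the sum of the rewards along the path that `π` takes from `v` to the sink `s`. -/
noncomputable def BVal (n : ℕ) (π : BV → BV) (v : BV) : ℚ :=
  if h : ∃ k, π^[k] v = BV.s then
    ∑ i ∈ Finset.range (Nat.find h), rB n (π^[i] v) (π^[i + 1] v)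
  else 0

/-- The reduced costs of the edge `(u,v)` w.r.t. the policy `π`. -/
noncomputable def zB (n : ℕ) (π : BV → BV) (u v : BV) : ℚ :=
  rB n u v + BVal n π v - BVal n π u

/-- The edge `(u,v)` is an improving switch for `π` if its reduced costs are positive. -/
def BImproving (n : ℕ) (π : BV → BV) (u v : BV) : Prop :=
  BEdge n u v ∧ 0 < zB n π u v

/-- The Bland numbering `𝒩_{𝔅_n}` of the edges of `𝔅_n`. -/
def NB (n : ℕ) (u v : BV) : ℕ :=
  match u, v with
  | BV.t, BV.a i => i
  | BV.a i, BV.b _ => n + 1 + 5 * (i - 1)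
  | BV.a i, BV.a _ => n + 2 + 5 * (i - 1)
  | BV.a i, BV.s => n + 2 + 5 * (i - 1)
  | BV.a i, BV.t => n + 3 + 5 * (i - 1)
  | BV.b i, BV.b _ => n + 4 + 5 * (i - 1)
  | BV.b i, BV.d => n + 4 + 5 * (i - 1)
  | BV.b i, BV.a _ => n + 5 + 5 * (i - 1)
  | BV.b i, BV.s => n + 5 + 5 * (i - 1)
  | BV.d, BV.s => 6 * n + 1
  | BV.s, BV.s => 6 * n + 2
  | _, _ => 0

/-- One step of Bland's policy iteration with edge numbering `N`:
apply the improving switch with the smallest number. -/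
def IsBlandStep (n : ℕ) (N : BV → BV → ℕ) (π π' : BV → BV) : Prop :=
  ∃ u v, BImproving n π u v ∧ (∀ u' v', BImproving n π u' v' → N u v ≤ N u' v') ∧
    π' = Function.update π u v

/-- `BlandReaches n N π ψ` says that Bland's policy iteration started at `π` visits `ψ`. -/
def BlandReaches (n : ℕ) (N : BV → BV → ℕ) : (BV → BV) → (BV → BV) → Prop :=
  Relation.ReflTransGen (IsBlandStep n N)

/-- The canonical policy `π_0` for `0`: `travel 1`, `skip i` and `leave i` are active. -/
def pi0 (n : ℕ) : BV → BV := fun u =>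
  match u with
  | BV.t => BV.a 1
  | BV.a i => aN n (i + 1)
  | BV.b i => aN n (i + 1)
  | BV.d => BV.s
  | BV.s => BV.s

/-- The optimal policy `π_*`: `travel 1`, `enter i` for all `i`, `leave j` for `j < n`,
and `stay n` are active. -/
def piStar (n : ℕ) : BV → BV := fun u =>
  match u with
  | BV.t => BV.a 1
  | BV.a i => BV.b i
  | BV.b i => if i = n then BV.d else BV.a (i + 1)
  | BV.d => BV.s
  | BV.s => BV.s

/-! ## Bits and canonical policies -/

/-- The least significant set bit `ℓ_1(x)` (1-based). -/
noncomputable def lsb (x : ℕ) : ℕ := sInf {i | 1 ≤ i ∧ Nat.testBit x (i - 1)}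

/-- The most significant set bit `m(x)` (1-based). -/
noncomputable def msb1 (x : ℕ) : ℕ := sSup {i | 1 ≤ i ∧ Nat.testBit x (i - 1)}

/-- The least unset bit `ℓ_0(x)` (1-based). -/
noncomputable def lzero (x : ℕ) : ℕ := sInf {i | 1 ≤ i ∧ ¬ Nat.testBit x (i - 1)}

/-- `L_i(x) = max { j ≤ i-2 | x_j = 1 or j = 1 }` (1-based bits). -/
noncomputable def Lfun (i x : ℕ) : ℕ :=
  sSup {j | 1 ≤ j ∧ j ≤ i - 2 ∧ (Nat.testBit x (j - 1) ∨ j = 1)}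

/-- `IsCanonical n x π` says that `π` is the canonical policy `π_x` for `x`. -/
noncomputable def IsCanonical (n x : ℕ) (π : BV → BV) : Prop :=
  IsBPolicy n π ∧
  if x = 0 then
    π BV.t = BV.a 1 ∧
      ∀ i, 1 ≤ i → i ≤ n → π (BV.a i) = aN n (i + 1) ∧ π (BV.b i) = aN n (i + 1)
  else
    π BV.t = BV.a (lsb x) ∧
    π (BV.b (msb1 x)) = aN n (msb1 x + 1) ∧
    (∀ i, msb1 x < i → i ≤ n → π (BV.a i) = aN n (i + 1) ∧ π (BV.b i) = aN n (i + 1)) ∧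
    ∀ i, 1 ≤ i → i ≤ n → Nat.testBit x (i - 1) →
      π (BV.a i) = BV.b i ∧
      (i = 2 → π (BV.b 1) = BV.a 2 ∧ (¬ Nat.testBit x 0 → π (BV.a 1) = BV.a 2)) ∧
      (3 ≤ i → Nat.testBit x (i - 2) → π (BV.b (i - 1)) = BV.a i) ∧
      (3 ≤ i → ¬ Nat.testBit x (i - 2) →
        π (BV.b (i - 1)) = BV.b i ∧ π (BV.a (i - 1)) = BV.a i ∧
        π (BV.b (i - 2)) = BV.a (i - 1) ∧
        (Lfun i x < i - 2 →
          ∀ j, Lfun i x + 1 ≤ j → j ≤ i - 2 →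
            π (BV.a j) = BV.t ∧ π (BV.b (j - 1)) = BV.b j) ∧
        (Lfun i x = 1 → ¬ Nat.testBit x 0 → π (BV.a 1) = BV.t))

/-- Activating a list of edges in a policy, from left to right. -/
def activateList (π : BV → BV) (L : List (BV × BV)) : BV → BV :=
  L.foldl (fun σ e => Function.update σ e.1 e.2) π

/-- The canonical phases w.r.t. an odd number `x` (with `ℓ := ℓ_0(x)`), as a list of edges
to be activated in order. -/
noncomputable def phaseList (n x : ℕ) : List (BV × BV) :=
  let ℓ := lzero x
  (if Nat.testBit x ℓ then [(BV.b ℓ, aN n (ℓ + 1))] else []) ++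
  (if Nat.testBit x ℓ ∨ msb1 x < ℓ then [(BV.b (ℓ - 1), BV.b ℓ)] else []) ++
  [(BV.a ℓ, BV.b ℓ), (BV.t, BV.a ℓ)] ++
  ((List.range (ℓ - 2)).map fun j => (BV.a (j + 1), BV.t)) ++
  [(BV.a (ℓ - 1), BV.a ℓ)] ++
  (((List.range (ℓ - 3)).reverse).map fun j => (BV.b (j + 1), BV.b (j + 2))) ++
  (if ℓ = 2 then [(BV.b 1, BV.a 2)] else [])

/-! ## The Markov decision process `𝔇_n` -/

/-- Vertices of `𝔇_n`: the original vertices (`base`), and for every edge `(v,w)` of `𝔅_n`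
other than the self-loop, the gadget vertices `x v w`, `y v w`, `z v w`. -/
inductive DV : Type where
  | base : BV → DV
  | x : BV → BV → DV
  | y : BV → BV → DV
  | z : BV → BV → DV
deriving DecidableEq

/-- The edges of `𝔅_n` that get replaced by gadgets (all edges except the self-loop `(s,s)`). -/
def DEdgePair (n : ℕ) (v w : BV) : Prop := BEdge n v w ∧ v ≠ BV.s

/-- The vertex set of `𝔇_n`. -/
def IsDVertex (n : ℕ) : DV → Prop
  | DV.base v => IsBVertex n v
  | DV.x v w => DEdgePair n v w
  | DV.y v w => DEdgePair n v w
  | DV.z v w => DEdgePair n v w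

/-- The agent vertices of `𝔇_n` (all vertices except the randomization vertices `y v w`). -/
def IsDAgent (n : ℕ) : DV → Prop
  | DV.base v => IsBVertex n v
  | DV.x v w => DEdgePair n v w
  | DV.y _ _ => False
  | DV.z v w => DEdgePair n v w

/-- The agent edges of `𝔇_n`. -/
def DEdge (n : ℕ) (u u' : DV) : Prop :=
  (∃ v w, DEdgePair n v w ∧
    ((u = DV.base v ∧ u' = DV.x v w) ∨ (u = DV.x v w ∧ u' = DV.base v) ∨
     (u = DV.x v w ∧ u' = DV.y v w) ∨ (u = DV.z v w ∧ u' = DV.base w))) ∨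
  (u = DV.base BV.s ∧ u' = DV.base BV.s)

/-- The reward function of `𝔇_n`: the edge `(z v w, w)` carries the reward of the original
edge `(v,w)`; all other agent edges have reward `0`. -/
def rD (n : ℕ) (u u' : DV) : ℚ :=
  match u, u' with
  | DV.z v w, DV.base w' => if w' = w then rB n v w else 0
  | _, _ => 0

/-- A policy for `𝔇_n` chooses an outgoing agent edge at every agent vertex. -/
def IsDPolicy (n : ℕ) (π : DV → DV) : Prop := ∀ u, IsDAgent n u → DEdge n u (π u)

/-- `IsDVal n p π V` says that `V` satisfies the Bellman equations characterizing the value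
function of the policy `π` for `𝔇_n` with probabilities `p`, with `V s = 0`. -/
def IsDVal (n : ℕ) (p : BV → ℚ) (π : DV → DV) (V : DV → ℚ) : Prop :=
  V (DV.base BV.s) = 0 ∧
  (∀ u, IsDAgent n u → V u = rD n u (π u) + V (π u)) ∧
  (∀ v w, DEdgePair n v w →
    V (DV.y v w) = p v * V (DV.z v w) + (1 - p v) * V (DV.base v))

open Classical in
/-- The value function of a (weak unichain) policy `π` for `𝔇_n`: the unique solution of the
Bellman equations (normalized to `0` outside the vertex set). -/
noncomputable def DVal (n : ℕ) (p : BV → ℚ) (π : DV → DV) : DV → ℚ :=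
  if h : ∃! V : DV → ℚ, IsDVal n p π V ∧ ∀ u, ¬ IsDVertex n u → V u = 0 then
    h.exists.choose
  else fun _ => 0

/-- The reduced costs of an agent edge `(u,u')` of `𝔇_n` w.r.t. the policy `π`. -/
noncomputable def zD (n : ℕ) (p : BV → ℚ) (π : DV → DV) (u u' : DV) : ℚ :=
  rD n u u' + DVal n p π u' - DVal n p π u

/-- An agent edge of `𝔇_n` is an improving switch if its reduced costs are positive. -/
def DImproving (n : ℕ) (p : BV → ℚ) (π : DV → DV) (u u' : DV) : Prop :=
  DEdge n u u' ∧ 0 < zD n p π u u'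

/-- One (agent or positive-probability randomization) step of the process `𝔇_n` under `π`. -/
def DStep (n : ℕ) (p : BV → ℚ) (π : DV → DV) (u u' : DV) : Prop :=
  (IsDAgent n u ∧ u' = π u) ∨
  (∃ v w, DEdgePair n v w ∧ u = DV.y v w ∧
    ((u' = DV.z v w ∧ 0 < p v) ∨ (u' = DV.base v ∧ 0 < 1 - p v)))

/-- A policy for `𝔇_n` is weak unichain if it reaches `s` with probability one from every
vertex, i.e. `s` is reachable via active/positive-probability steps from every vertex. -/
def DWeakUnichain (n : ℕ) (p : BV → ℚ) (π : DV → DV) : Prop :=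
  ∀ u, IsDVertex n u → Relation.ReflTransGen (DStep n p π) u (DV.base BV.s)

/-- The twin policy of a policy `π` for `𝔅_n`: every vertex `v ≠ s` is `π v`-oriented. -/
def twin (π : BV → BV) : DV → DV := fun u =>
  match u with
  | DV.base v => if v = BV.s then DV.base BV.s else DV.x v (π v)
  | DV.x v w => if w = π v then DV.y v w else DV.base v
  | DV.y v w => DV.y v w
  | DV.z _ w => DV.base w

/-- The vertex numbering `𝒩_V` of `𝔅_n`: the order `(t, a 1, b 1, a 2, b 2, …, a n, b n, d, s)`. -/
def NV (n : ℕ) : BV → ℕ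
  | BV.t => 1
  | BV.a i => 2 * i
  | BV.b i => 2 * i + 1
  | BV.d => 2 * n + 2
  | BV.s => 2 * n + 3

/-- The specific probabilities `p_v = 2^{-𝒩_V(v)·(n+5)}`. -/
noncomputable def pSpec (n : ℕ) (v : BV) : ℚ := (2 : ℚ) ^ (-((NV n v * (n + 5) : ℕ) : ℤ))

/-- The set `B(v)` of agent edges of `𝔇_n` belonging to the vertex `v`. -/
def Belongs (n : ℕ) (v : BV) (e : DV × DV) : Prop :=
  ∃ w, DEdgePair n v w ∧
    (e = (DV.x v w, DV.y v w) ∨ e = (DV.base v, DV.x v w) ∨ e = (DV.x v w, DV.base v))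

/-- Applying the improving switch `e` to the policy `π` yields `π'`. -/
def DApply (n : ℕ) (p : BV → ℚ) (π : DV → DV) (e : DV × DV) (π' : DV → DV) : Prop :=
  DImproving n p π e.1 e.2 ∧ π' = Function.update π e.1 e.2

/-- One step of Bland's policy iteration on `𝔇_n` with edge numbering `N`. -/
def IsBlandStepD (n : ℕ) (p : BV → ℚ) (N : DV → DV → ℕ) (π π' : DV → DV) : Prop :=
  ∃ u u', DImproving n p π u u' ∧ (∀ a b, DImproving n p π a b → N u u' ≤ N a b) ∧
    π' = Function.update π u u'

/-- One step of Dantzig's policy iteration on `𝔇_n`: apply an improving switch of maximal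
reduced costs. -/
def DantzigStep (n : ℕ) (p : BV → ℚ) (π π' : DV → DV) : Prop :=
  ∃ u u', DImproving n p π u u' ∧
    (∀ a b, DImproving n p π a b → zD n p π a b ≤ zD n p π u u') ∧
    π' = Function.update π u u'

/-- The finite set of vertices of `𝔅_n`, as a `Finset`. -/
noncomputable def BVSet (n : ℕ) : Finset BV :=
  {BV.t, BV.d, BV.s} ∪ (Finset.Icc 1 n).image BV.a ∪ (Finset.Icc 1 n).image BV.b

/-- The finite set of agent vertices of `𝔇_n`, as a `Finset`. -/
noncomputable def DAgentSet (n : ℕ) : Finset DV := by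
  classical
  exact ((BVSet n).image DV.base) ∪
    (((BVSet n ×ˢ BVSet n).filter fun e => DEdgePair n e.1 e.2).image fun e => DV.x e.1 e.2) ∪
    (((BVSet n ×ˢ BVSet n).filter fun e => DEdgePair n e.1 e.2).image fun e => DV.z e.1 e.2)

/-- The objective of the Largest Increase rule: the sum of the values of all agent vertices. -/
noncomputable def LIobj (n : ℕ) (p : BV → ℚ) (π : DV → DV) : ℚ :=
  ∑ u ∈ DAgentSet n, DVal n p π u

/-- One step of the Largest Increase policy iteration on `𝔇_n`: apply an improving switch
maximizing the sum of all agent vertex values of the resulting policy. -/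
def LIStep (n : ℕ) (p : BV → ℚ) (π π' : DV → DV) : Prop :=
  ∃ u u', DImproving n p π u u' ∧
    (∀ a b, DImproving n p π a b →
      LIobj n p (Function.update π a b) ≤ LIobj n p (Function.update π u u')) ∧
    π' = Function.update π u u'

/-- `N` is a Bland numbering `𝒩_{𝔇_n}` for `𝔇_n`: it is injective on agent edges, the edges
`(x v w, v)` all come first, within each gadget `(x v w, y v w)` precedes `(v, x v w)`,
the gadget blocks are ordered according to `𝒩_{𝔅_n}`, and the self-loop comes last. -/
def IsDBlandNumbering (n : ℕ) (N : DV → DV → ℕ) : Prop :=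
  (∀ u₁ u₂ u₁' u₂', DEdge n u₁ u₂ → DEdge n u₁' u₂' → N u₁ u₂ = N u₁' u₂' →
    u₁ = u₁' ∧ u₂ = u₂') ∧
  (∀ v w v' w', DEdgePair n v w → DEdgePair n v' w' →
    N (DV.x v w) (DV.base v) < N (DV.x v' w') (DV.y v' w')) ∧
  (∀ v w, DEdgePair n v w → N (DV.x v w) (DV.y v w) < N (DV.base v) (DV.x v w)) ∧
  (∀ v w v' w', DEdgePair n v w → DEdgePair n v' w' → NB n v w < NB n v' w' →
    N (DV.base v) (DV.x v w) < N (DV.x v' w') (DV.y v' w')) ∧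
  (∀ v w, DEdgePair n v w → N (DV.base v) (DV.x v w) < N (DV.base BV.s) (DV.base BV.s))

/-! Since `travel(i)` has reward `0`, the claim is that no `a i` is worth more than `t`. From `t`
the policy `π_x` goes to `a ℓ₁(x)` and then visits the vertices `a p` at the set bits `p` of `x` in
increasing order, collecting `2 ^ p` at each of them and never a negative reward. Hence values
decrease along the set bits, and `t`, which has the value of the first of them, dominates all. An
unset bit `i` above all set bits has value `0`; one directly below a set bit skips to it; any other
boards to `t` at the cost `2 ^ i - 5 / 4 > 0`. -/

open Set

section BackwardInduction

variable {S : Set ℕ}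

theorem exists_isLeast_inter_Ioi {i m : ℕ} (hm : m ∈ S) (him : i < m) :
    ∃ p, IsLeast (S ∩ Ioi i) p :=
  ⟨_, Nat.sInf_mem ⟨m, hm, him⟩, fun _ => Nat.sInf_le⟩

theorem backward_induction_of_isLeast {P : ℕ → Prop} {m : ℕ} (hm : m ∈ S) (base : P m)
    (step : ∀ i ∈ S, ∀ p, IsLeast (S ∩ Ioi i) p → P p → P i) : ∀ i ∈ S, i ≤ m → P i := by
  intro i hi him
  induction hk : m - i using Nat.strong_induction_on generalizing i with
  | _ k ih =>
    obtain rfl | him := him.eq_or_lt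
    · exact base
    · obtain ⟨p, hp⟩ := exists_isLeast_inter_Ioi hm him
      have hip : i < p := hp.1.2
      exact step i hi p hp (ih (m - p) (by omega) p hp.1.1 (hp.2 ⟨hm, him⟩) rfl)

theorem antitoneOn_of_isLeast_le {α : Type*} [Preorder α] {f : ℕ → α}
    (hf : ∀ i ∈ S, ∀ p, IsLeast (S ∩ Ioi i) p → f p ≤ f i) : AntitoneOn f S :=
  fun i hi j hj hij => backward_induction_of_isLeast (P := fun i => f j ≤ f i) hj le_rfl
    (fun i hi p hp hle => hle.trans (hf i hi p hp)) i hi hij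

end BackwardInduction

section Value

variable {n : ℕ} {π : BV → BV} {u w : BV} {q : ℚ}

/-- The policy `π` reaches the sink from `v` and collects the total reward `q` on the way. The first
conjunct is needed because `BVal` is `0` by convention where the sink is not reached. -/
def HasBVal (n : ℕ) (π : BV → BV) (v : BV) (q : ℚ) : Prop :=
  (∃ k, π^[k] v = BV.s) ∧ BVal n π v = q

theorem hasBVal_s : HasBVal n π BV.s 0 := by
  have h : ∃ k, π^[k] BV.s = BV.s := ⟨0, rfl⟩
  refine ⟨h, ?_⟩
  rw [BVal, dif_pos h, (Nat.find_eq_zero h).2 rfl, Finset.sum_range_zero]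

theorem HasBVal.step (hu : u ≠ BV.s) (huw : π u = w) (hw : HasBVal n π w q) :
    HasBVal n π u (rB n u w + q) := by
  subst huw
  obtain ⟨hreach, rfl⟩ := hw
  have hreach' : ∃ k, π^[k + 1] u = BV.s := hreach
  have hreach_u : ∃ k, π^[k] u = BV.s := hreach'.imp' (· + 1) fun _ => id
  have hfind : Nat.find hreach_u = Nat.find hreach + 1 := Nat.find_comp_succ hreach_u hreach' hu
  have hsum : ∑ i ∈ Finset.range (Nat.find hreach_u), rB n (π^[i] u) (π^[i + 1] u) =
      ∑ i ∈ Finset.range (Nat.find hreach), rB n (π^[i] (π u)) (π^[i + 1] (π u)) +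
        rB n u (π u) := by
    rw [hfind]
    exact Finset.sum_range_succ' _ _
  refine ⟨hreach_u, ?_⟩
  rw [BVal, BVal, dif_pos hreach_u, dif_pos hreach, add_comm]
  convert hsum

theorem HasBVal.step_of_rB_eq_zero (hu : u ≠ BV.s) (huw : π u = w) (hr : rB n u w = 0)
    (hw : HasBVal n π w q) : HasBVal n π u q := by
  simpa only [hr, zero_add] using hw.step hu huw

theorem HasBVal.b_of_stay {i : ℕ} :
    ∀ {k : ℕ} {q : ℚ}, (∀ j < k, π (BV.b (i + j)) = BV.b (i + j + 1)) →
      HasBVal n π (BV.b (i + k)) q → HasBVal n π (BV.b i) (k * (3 / 4) + q)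
  | 0, q, _, h => by simpa using h
  | k + 1, q, hstay, h => by
    have hk := (h.step (by simp) (hstay k k.lt_succ_self)).b_of_stay
      fun j hj => hstay j (hj.trans k.lt_succ_self)
    convert hk using 1
    simp [rB]
    ring

theorem aN_of_le {i : ℕ} (hi : i ≤ n) : aN n i = BV.a i :=
  if_neg (by omega)

theorem rB_a_aN (i j : ℕ) : rB n (BV.a i) (aN n j) = 0 := by
  unfold aN; split <;> rfl

theorem rB_b_aN (i j : ℕ) : rB n (BV.b i) (aN n j) = 0 := by
  unfold aN; split <;> rfl

theorem hasBVal_aN_of_skip {i : ℕ} (hi : i ≤ n + 1)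
    (hskip : ∀ j, i ≤ j → j ≤ n → π (BV.a j) = aN n (j + 1)) : HasBVal n π (aN n i) 0 := by
  induction hi using Nat.decreasingInduction with
  | self => simpa only [aN, if_true] using hasBVal_s
  | of_succ j hj ih =>
    have hjn : j ≤ n := Nat.lt_succ_iff.1 hj
    rw [aN_of_le hjn]
    exact (ih fun r hr => hskip r (by omega)).step_of_rB_eq_zero (by simp) (hskip j le_rfl hjn)
      (rB_a_aN _ _)

end Value

section SetBits

variable {n x i p : ℕ}

/-- The set of positions of the bits of `x` that are `1`, counted from `1` as in `lsb` and `msb1`,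
which are its infimum and supremum. -/
def setBits (x : ℕ) : Set ℕ := {i | 1 ≤ i ∧ x.testBit (i - 1)}

theorem succ_mem_setBits : i + 1 ∈ setBits x ↔ x.testBit i := by
  simp [setBits]

theorem ne_zero_of_mem_setBits (hi : i ∈ setBits x) : x ≠ 0 := by
  rintro rfl
  simp [setBits] at hi

theorem setBits_nonempty (hx : x ≠ 0) : (setBits x).Nonempty :=
  let ⟨j, hj⟩ := Nat.exists_testBit_of_ne_zero hx
  ⟨j + 1, succ_mem_setBits.2 hj⟩

theorem le_of_mem_setBits (hx : x < 2 ^ n) (hi : i ∈ setBits x) : i ≤ n := by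
  have hpow : 2 ^ (i - 1) < 2 ^ n := (Nat.ge_two_pow_of_testBit hi.2).trans_lt hx
  have : i - 1 < n := (Nat.pow_lt_pow_iff_right Nat.one_lt_two).1 hpow
  omega

theorem isLeast_lsb (hx : x ≠ 0) : IsLeast (setBits x) (lsb x) :=
  ⟨Nat.sInf_mem (setBits_nonempty hx), fun _ => Nat.sInf_le⟩

theorem isGreatest_msb1 (hx : x ≠ 0) : IsGreatest (setBits x) (msb1 x) :=
  have hbdd : BddAbove (setBits x) := ⟨x, fun _ => le_of_mem_setBits x.lt_two_pow_self⟩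
  ⟨Nat.sSup_mem (setBits_nonempty hx) hbdd, fun _ => le_csSup hbdd⟩

theorem msb1_zero : msb1 0 = 0 := by
  simp [msb1]

theorem isGreatest_Lfun (hp : 3 ≤ p) :
    IsGreatest {j | 1 ≤ j ∧ j ≤ p - 2 ∧ (x.testBit (j - 1) ∨ j = 1)} (Lfun p x) :=
  have hbdd : BddAbove {j | 1 ≤ j ∧ j ≤ p - 2 ∧ (x.testBit (j - 1) ∨ j = 1)} :=
    ⟨p - 2, fun _ hj => hj.2.1⟩
  ⟨Nat.sSup_mem ⟨1, le_rfl, by omega, Or.inr rfl⟩ hbdd, fun _ => le_csSup hbdd⟩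

/-- `p` is the least position above `i` whose bit in `x` is `1`; the `i`-th bit is arbitrary. -/
def IsNextBit (x i p : ℕ) : Prop := IsLeast (setBits x ∩ Ioi i) p

theorem IsNextBit.notMem {j : ℕ} (h : IsNextBit x i p) (hij : i < j) (hjp : j < p) :
    j ∉ setBits x :=
  fun hj => hjp.not_ge (h.2 ⟨hj, hij⟩)

theorem IsNextBit.not_testBit_sub_two (h : IsNextBit x i p) (hip : i + 1 < p) :
    ¬ x.testBit (p - 2) :=
  fun hbit => h.notMem (j := p - 2 + 1) (by omega) (by omega) (succ_mem_setBits.2 hbit)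

theorem IsNextBit.Lfun_le_or_eq_one (h : IsNextBit x i p) (hi : 1 ≤ i) (hip : i + 1 < p) :
    Lfun p x ≤ i ∨ Lfun p x = 1 := by
  obtain ⟨hL, hLp, hbit⟩ := (isGreatest_Lfun (x := x) (p := p) (by omega)).1
  refine hbit.imp_left fun hbit => not_lt.1 fun hiL => ?_
  exact h.notMem hiL (by omega) ⟨hL, hbit⟩

theorem IsNextBit.Lfun_eq_of_mem (h : IsNextBit x i p) (hi : i ∈ setBits x) (hip : i + 1 < p) :
    Lfun p x = i := by
  have hi1 : 1 ≤ i := hi.1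
  have hle : i ≤ Lfun p x := (isGreatest_Lfun (by omega)).2 ⟨hi1, by omega, Or.inl hi.2⟩
  have := h.Lfun_le_or_eq_one hi1 hip
  omega

theorem IsNextBit.Lfun_lt_or_eq_one (h : IsNextBit x i p) (hi1 : 1 ≤ i) (hi : i ∉ setBits x)
    (hip : i + 1 < p) : Lfun p x < i ∨ i = 1 ∧ Lfun p x = 1 := by
  obtain ⟨hL, -, hbit | hL1⟩ := (isGreatest_Lfun (x := x) (p := p) (by omega)).1
  · have hne : Lfun p x ≠ i := fun heq => hi (heq ▸ ⟨hL, hbit⟩)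
    have := h.Lfun_le_or_eq_one hi1 hip
    omega
  · omega

end SetBits

namespace IsCanonical

variable {n x i j p : ℕ} {π : BV → BV} {q : ℚ}

theorem travel (h : IsCanonical n x π) (hx0 : x ≠ 0) : π BV.t = BV.a (lsb x) :=
  ((if_neg hx0).mp h.2).1

theorem leave_msb1 (h : IsCanonical n x π) (hx0 : x ≠ 0) :
    π (BV.b (msb1 x)) = aN n (msb1 x + 1) :=
  ((if_neg hx0).mp h.2).2.1

theorem skip_of_msb1_lt (h : IsCanonical n x π) (hi : msb1 x < i) (hin : i ≤ n) :
    π (BV.a i) = aN n (i + 1) := by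
  by_cases hx0 : x = 0
  · exact (((if_pos hx0).mp h.2).2 i (by omega) hin).1
  · exact (((if_neg hx0).mp h.2).2.2.1 i hi hin).1

theorem enter (h : IsCanonical n x π) (hx : x < 2 ^ n) (hi : i ∈ setBits x) :
    π (BV.a i) = BV.b i :=
  (((if_neg (ne_zero_of_mem_setBits hi)).mp h.2).2.2.2 i hi.1 (le_of_mem_setBits hx hi) hi.2).1

theorem leave_of_succ_mem (h : IsCanonical n x π) (hx : x < 2 ^ n) (hi : i ∈ setBits x)
    (hi' : i + 1 ∈ setBits x) : π (BV.b i) = BV.a (i + 1) := by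
  obtain ⟨-, h2, h3, -⟩ := ((if_neg (ne_zero_of_mem_setBits hi)).mp h.2).2.2.2 (i + 1) hi'.1
    (le_of_mem_setBits hx hi') hi'.2
  obtain rfl | hi1 := eq_or_lt_of_le hi.1
  · exact (h2 rfl).1
  · exact h3 (by omega) hi.2

theorem skip_of_succ_mem (h : IsCanonical n x π) (hx : x < 2 ^ n) (hi1 : 1 ≤ i)
    (hi : i ∉ setBits x) (hi' : i + 1 ∈ setBits x) : π (BV.a i) = BV.a (i + 1) := by
  obtain ⟨-, h2, -, h3⟩ := ((if_neg (ne_zero_of_mem_setBits hi')).mp h.2).2.2.2 (i + 1) hi'.1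
    (le_of_mem_setBits hx hi') hi'.2
  have hbit : ¬ x.testBit (i - 1) := fun hbit => hi ⟨hi1, hbit⟩
  obtain rfl | hi1 := hi1.eq_or_lt
  · exact (h2 rfl).2 hbit
  · exact (h3 (by omega) hbit).2.1

theorem leave_of_add_two_mem (h : IsCanonical n x π) (hx : x < 2 ^ n) (hi1 : 1 ≤ i)
    (hi : i + 1 ∉ setBits x) (hi' : i + 2 ∈ setBits x) : π (BV.b i) = BV.a (i + 1) := by
  obtain ⟨-, -, -, h3⟩ := ((if_neg (ne_zero_of_mem_setBits hi')).mp h.2).2.2.2 (i + 2) hi'.1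
    (le_of_mem_setBits hx hi') hi'.2
  exact (h3 (by omega) fun hbit => hi (succ_mem_setBits.2 hbit)).2.2.1

theorem stay_of_isNextBit (h : IsCanonical n x π) (hx : x < 2 ^ n) (hi : i ∈ setBits x)
    (hp : IsNextBit x i p) (hij : i ≤ j) (hjp : j + 2 < p) : π (BV.b j) = BV.b (j + 1) := by
  obtain ⟨-, -, -, h3⟩ := ((if_neg (ne_zero_of_mem_setBits hi)).mp h.2).2.2.2 p hp.1.1.1
    (le_of_mem_setBits hx hp.1.1) hp.1.1.2
  have hbit : ¬ x.testBit (p - 2) := hp.not_testBit_sub_two (by omega)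
  have hL : Lfun p x = i := hp.Lfun_eq_of_mem hi (by omega)
  exact ((h3 (by omega) hbit).2.2.2.1 (by omega) (j + 1) (by omega) (by omega)).2

theorem board_of_isNextBit (h : IsCanonical n x π) (hx : x < 2 ^ n) (hi1 : 1 ≤ i)
    (hi : i ∉ setBits x) (hp : IsNextBit x i p) (hip : i + 1 < p) : π (BV.a i) = BV.t := by
  obtain ⟨-, -, -, h3⟩ := ((if_neg (ne_zero_of_mem_setBits hp.1.1)).mp h.2).2.2.2 p hp.1.1.1
    (le_of_mem_setBits hx hp.1.1) hp.1.1.2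
  have hbit : ¬ x.testBit (p - 2) := hp.not_testBit_sub_two (by omega)
  obtain ⟨-, -, -, hboard, hboard_one⟩ := h3 (by omega) hbit
  obtain hL | ⟨rfl, hL⟩ := hp.Lfun_lt_or_eq_one hi1 hi hip
  · exact (hboard (by omega) i hL (by omega)).1
  · exact hboard_one hL fun hbit => hi (succ_mem_setBits.2 hbit)

theorem hasBVal_aN_of_msb1_lt (h : IsCanonical n x π) (hi : msb1 x < i) (hin : i ≤ n + 1) :
    HasBVal n π (aN n i) 0 :=
  hasBVal_aN_of_skip hin fun _ hj hjn => h.skip_of_msb1_lt (hi.trans_le hj) hjn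

-- The truncated subtraction covers `p = i + 1`, where `leave(i)` goes directly to `a p`.
theorem hasBVal_b_of_isNextBit (h : IsCanonical n x π) (hx : x < 2 ^ n) (hi : i ∈ setBits x)
    (hp : IsNextBit x i p) (hq : HasBVal n π (BV.a p) q) :
    HasBVal n π (BV.b i) ((p - 2 - i : ℕ) * (3 / 4) + q) := by
  have hi1 : 1 ≤ i := hi.1
  obtain ⟨hpbit, hip : i < p⟩ := hp.1
  obtain rfl | hgap := (Nat.succ_le_of_lt hip).eq_or_lt
  · simpa using hq.step_of_rB_eq_zero (by simp) (h.leave_of_succ_mem hx hi hpbit) rfl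
  · obtain ⟨k, rfl⟩ : ∃ k, p = i + k + 2 := ⟨p - 2 - i, by omega⟩
    have hunset : i + k + 1 ∉ setBits x := hp.notMem (by omega) (by omega)
    have hskip : HasBVal n π (BV.a (i + k + 1)) q :=
      hq.step_of_rB_eq_zero (by simp) (h.skip_of_succ_mem hx (by omega) hunset hpbit) rfl
    have hleave : HasBVal n π (BV.b (i + k)) q :=
      hskip.step_of_rB_eq_zero (by simp) (h.leave_of_add_two_mem hx (by omega) hunset hpbit) rfl
    rw [show i + k + 2 - 2 - i = k by omega]
    exact hleave.b_of_stay fun j hj => h.stay_of_isNextBit hx hi hp (by omega) (by omega)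

theorem hasBVal_a_of_isNextBit (h : IsCanonical n x π) (hx : x < 2 ^ n) (hi : i ∈ setBits x)
    (hp : IsNextBit x i p) (hq : HasBVal n π (BV.a p) q) :
    HasBVal n π (BV.a i) (2 ^ i + ((p - 2 - i : ℕ) * (3 / 4) + q)) := by
  simpa [rB] using (h.hasBVal_b_of_isNextBit hx hi hp hq).step (by simp) (h.enter hx hi)

theorem hasBVal_a_msb1 (h : IsCanonical n x π) (hx : x < 2 ^ n) (hx0 : x ≠ 0) :
    HasBVal n π (BV.a (msb1 x)) (2 ^ msb1 x) := by
  have hm : msb1 x ∈ setBits x := (isGreatest_msb1 hx0).1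
  have hb : HasBVal n π (BV.b (msb1 x)) 0 :=
    (h.hasBVal_aN_of_msb1_lt (Nat.lt_succ_self _)
      (Nat.succ_le_succ (le_of_mem_setBits hx hm))).step_of_rB_eq_zero
      (by simp) (h.leave_msb1 hx0) (rB_b_aN _ _)
  simpa [rB] using hb.step (by simp) (h.enter hx hm)

theorem exists_hasBVal_a_of_mem (h : IsCanonical n x π) (hx : x < 2 ^ n) (hi : i ∈ setBits x) :
    ∃ q, 0 ≤ q ∧ HasBVal n π (BV.a i) q := by
  have hm := isGreatest_msb1 (ne_zero_of_mem_setBits hi)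
  refine backward_induction_of_isLeast (P := fun i => ∃ q, 0 ≤ q ∧ HasBVal n π (BV.a i) q)
    hm.1 ?_ ?_ i hi (hm.2 hi)
  · exact ⟨_, by positivity, h.hasBVal_a_msb1 hx (ne_zero_of_mem_setBits hi)⟩
  · rintro i hi p hp ⟨q, hq0, hq⟩
    exact ⟨_, by positivity, h.hasBVal_a_of_isNextBit hx hi hp hq⟩

theorem antitoneOn_bVal_a (h : IsCanonical n x π) (hx : x < 2 ^ n) :
    AntitoneOn (fun i => BVal n π (BV.a i)) (setBits x) := by
  refine antitoneOn_of_isLeast_le fun i hi p hp => ?_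
  obtain ⟨q, -, hq⟩ := h.exists_hasBVal_a_of_mem hx hp.1.1
  calc BVal n π (BV.a p) = q := hq.2
    _ ≤ 2 ^ i + ((p - 2 - i : ℕ) * (3 / 4) + q) := by
      rw [← add_assoc]
      exact le_add_of_nonneg_left (by positivity)
    _ = BVal n π (BV.a i) := (h.hasBVal_a_of_isNextBit hx hi hp hq).2.symm

theorem bVal_t (h : IsCanonical n x π) (hx : x < 2 ^ n) (hx0 : x ≠ 0) :
    BVal n π BV.t = BVal n π (BV.a (lsb x)) := by
  obtain ⟨q, -, hq⟩ := h.exists_hasBVal_a_of_mem hx (isLeast_lsb hx0).1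
  exact (hq.step_of_rB_eq_zero (by simp) (h.travel hx0) rfl).2.trans hq.2.symm

theorem exists_hasBVal_t (h : IsCanonical n x π) (hn : 1 ≤ n) (hx : x < 2 ^ n) :
    ∃ q, 0 ≤ q ∧ HasBVal n π BV.t q := by
  by_cases hx0 : x = 0
  · have ha : HasBVal n π (BV.a 1) 0 :=
      aN_of_le hn ▸ h.hasBVal_aN_of_msb1_lt (by simp [hx0, msb1_zero]) (by omega)
    exact ⟨0, le_rfl, ha.step_of_rB_eq_zero (by simp) ((if_pos hx0).mp h.2).1 rfl⟩
  · obtain ⟨q, hq0, hq⟩ := h.exists_hasBVal_a_of_mem hx (isLeast_lsb hx0).1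
    exact ⟨q, hq0, hq.step_of_rB_eq_zero (by simp) (h.travel hx0) rfl⟩

theorem bVal_a_le_bVal_t_of_mem (h : IsCanonical n x π) (hx : x < 2 ^ n) (hi : i ∈ setBits x) :
    BVal n π (BV.a i) ≤ BVal n π BV.t := by
  have hx0 := ne_zero_of_mem_setBits hi
  rw [h.bVal_t hx hx0]
  exact h.antitoneOn_bVal_a hx (isLeast_lsb hx0).1 hi ((isLeast_lsb hx0).2 hi)

theorem bVal_a_le_bVal_t_of_isNextBit (h : IsCanonical n x π) (hx : x < 2 ^ n) (hi1 : 1 ≤ i)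
    (hi : i ∉ setBits x) (hp : IsNextBit x i p) : BVal n π (BV.a i) ≤ BVal n π BV.t := by
  obtain ⟨hpbit, hip : i < p⟩ := hp.1
  obtain rfl | hgap := (Nat.succ_le_of_lt hip).eq_or_lt
  · obtain ⟨q, -, hq⟩ := h.exists_hasBVal_a_of_mem hx hpbit
    have hskip : HasBVal n π (BV.a i) q :=
      hq.step_of_rB_eq_zero (by simp) (h.skip_of_succ_mem hx hi1 hi hpbit) rfl
    rw [hskip.2, ← hq.2]
    exact h.bVal_a_le_bVal_t_of_mem hx hpbit
  · have hn : 1 ≤ n := hpbit.1.trans (le_of_mem_setBits hx hpbit)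
    obtain ⟨q, -, hq⟩ := h.exists_hasBVal_t hn hx
    have hboard : HasBVal n π (BV.a i) (-2 ^ i + 5 / 4 + q) :=
      hq.step (by simp) (h.board_of_isNextBit hx hi1 hi hp hgap)
    have hpow : (2 : ℚ) ^ 1 ≤ 2 ^ i := pow_le_pow_right₀ one_le_two hi1
    rw [hboard.2, hq.2]
    linarith

theorem bVal_a_le_bVal_t (h : IsCanonical n x π) (hx : x < 2 ^ n) (hi1 : 1 ≤ i) (hin : i ≤ n) :
    BVal n π (BV.a i) ≤ BVal n π BV.t := by
  by_cases hi : i ∈ setBits x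
  · exact h.bVal_a_le_bVal_t_of_mem hx hi
  rcases le_or_gt i (msb1 x) with him | him
  · have hx0 : x ≠ 0 := by
      rintro rfl
      rw [msb1_zero] at him
      omega
    have hm : msb1 x ∈ setBits x := (isGreatest_msb1 hx0).1
    obtain ⟨p, hp⟩ := exists_isLeast_inter_Ioi hm (him.lt_of_ne fun heq => hi (heq ▸ hm))
    exact h.bVal_a_le_bVal_t_of_isNextBit hx hi1 hi hp
  · obtain ⟨q, hq0, hq⟩ := h.exists_hasBVal_t (hi1.trans hin) hx
    have ha : HasBVal n π (BV.a i) 0 := aN_of_le hin ▸ h.hasBVal_aN_of_msb1_lt him (by omega)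
    rwa [ha.2, hq.2]

end IsCanonical

/-- For every `x ∈ {0,…,2^n-1}` and `i ∈ {1,…,n}`, the edge `travel i` is not an
improving switch for the canonical policy `π_x`. -/
theorem stmt3 (n : ℕ) (hn : 1 ≤ n) (x : ℕ) (hx : x ≤ 2 ^ n - 1)
    (i : ℕ) (hi1 : 1 ≤ i) (hin : i ≤ n)
    (π : BV → BV) (hπ : IsCanonical n x π) :
    ¬ BImproving n π BV.t (BV.a i) := by
  have hx' : x < 2 ^ n := by have := Nat.two_pow_pos n; omega
  rintro ⟨-, hz⟩
  simp only [zB, rB, zero_add, sub_pos] at hz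
  exact hz.not_ge (hπ.bVal_a_le_bVal_t hx' hi1 hin)
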